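/- Laguerre–Selberg integral (the λ = 0 case of Macdonald's integral formula): Let k > 0 and let μ ∈ ℂ with Re μ > μ₀ = k(n−1). Then the integral ∫_{ℝ₊ⁿ} e^{−(x₁+⋯+x_n)} D(x)^{μ−μ₀−1} ω_k(x) dx converges absolutely and equals d_n(k)·Γ_n(μ;k), i.e. ∫_{(0,∞)ⁿ} e^{−Σx_i} (∏_{i=1}^n x_i)^{μ−k(n−1)−1} ∏_{1≤i<j≤n}|x_i−x_j|^{2k} dx = (∏_{j=1}^n Γ(1+jk)/Γ(1+k)) · ∏_{j=1}^n Γ(μ−k(j−1)), where x^{w} for x > 0 and w ∈ ℂ denotes the principal power e^{w log x}. -/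

import Mathlib

/-!
Write `J_n(a)` for the integral of `e^{-Σ x_i} ∏ x_i^{a-1} ω_k(x)` over `ℝ₊ⁿ`. The theorem says
that `J_n(z) = d_n(k) ∏_{m<n} Γ(z + km)` for `Re z > 0`, where `z = μ - k(n-1)`.

*Functional equation.* Integrate `∂_i` of the density by parts. The weight contributes the kernels
`2k / (x_i - x_j)`; their integrals vanish by antisymmetry when `x_i` and `x_j` carry the same
exponent (`kint_eq_zero`), and when the exponents differ by one, symmetrising in `x_i, x_j` cancels
the singularity (`kint_eq_half`). Raising the exponents one variable at a time (`aomoto_step`) gives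
`J_n(a + 1) = ∏_{m<n} (a + km) J_n(a)` (`integ_add_one`). For small `k` the weight is not
differentiable and the kernel is singular on the diagonals, so all this is done with the smooth
weight `∏_{i≠j} ((x_i - x_j)² + ε)^{k/2}`, letting `ε → 0` by dominated convergence.

*Real exponents.* By Hölder, `J_n` is log-convex, and so is `∏_{m<n} Γ(a + km)`, which satisfies the
same functional equation. The Bohr–Mollerup argument (`convex_increment_unique`) shows that the two
are proportional. The constant comes from the same integration by parts without a power factor: only
the boundary term at `x_0 = 0` survives, so that `J_{n+1}(1) = J_n(2k + 1)` (`integ_zero_succ`), and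
induction on `n` determines it (`integ_eq`).

*Complex exponents.* `J_n` is the moment generating function of `log ∏ x_i` under a measure on
`ℝ₊ⁿ`, hence holomorphic for `Re z > 0`, and the identity theorem extends the formula from the
positive axis (`integral_cdens`).
-/

open MeasureTheory Finset

/-- The type-A Dunkl weight `ω_k(x) = ∏_{i<j} |x_i - x_j|^{2k}`. -/
noncomputable def wk (n : ℕ) (k : ℝ) (x : Fin n → ℝ) : ℝ :=
  ∏ i : Fin n, ∏ j ∈ Finset.Ioi i, |x i - x j| ^ (2 * k)

/-- The open positive orthant `ℝ₊ⁿ = (0,∞)ⁿ`. -/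
def Rplus (n : ℕ) : Set (Fin n → ℝ) := {x | ∀ i, 0 < x i}

namespace SelbergLaguerre

open Filter Topology

/-! ### The regularised density and its majorant -/

/-- The regularised weight `∏_{i≠j} ((x_i - x_j)² + ε)^{k/2}`, the product running over ordered
pairs. For `ε = 0` it is `ω_k`; for `ε > 0` it is smooth. -/
noncomputable def vand {n : ℕ} (k ε : ℝ) (x : Fin n → ℝ) : ℝ :=
  ∏ i, ∏ j, if i = j then 1 else ((x i - x j) ^ 2 + ε) ^ (k / 2)

/-- The regularised Selberg density with a separate exponent `b_j` for each variable. -/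
noncomputable def dens {n : ℕ} (k ε : ℝ) (b x : Fin n → ℝ) : ℝ :=
  (∏ j, x j ^ b j * Real.exp (-x j)) * vand k ε x

/-- The integral of the density over the orthant `ℝ₊ⁿ`. -/
noncomputable def integ {n : ℕ} (k ε : ℝ) (b : Fin n → ℝ) : ℝ :=
  ∫ x in Rplus n, dens k ε b x

lemma Rplus_eq (n : ℕ) : Rplus n = Set.univ.pi fun _ => Set.Ioi (0 : ℝ) := by
  ext x; simp [Rplus]

lemma measurableSet_Rplus (n : ℕ) : MeasurableSet (Rplus n) := by
  rw [Rplus_eq]; exact MeasurableSet.univ_pi fun _ => measurableSet_Ioi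

lemma vand_zero {n : ℕ} {k : ℝ} (hk : 0 < k) (x : Fin n → ℝ) : vand k 0 x = wk n k x := by
  have h0 : ∀ t : ℝ, (t ^ 2 + 0) ^ (k / 2) = |t| ^ k := by
    intro t
    rw [add_zero, ← sq_abs, ← Real.rpow_natCast, ← Real.rpow_mul (abs_nonneg _)]
    congr 1; push_cast; ring
  have h : ∀ i j : Fin n, |x i - x j| ^ (2 * k) = |x j - x i| ^ k * |x i - x j| ^ k := by
    intro i j
    rw [abs_sub_comm (x j), two_mul, Real.rpow_add' (abs_nonneg _) (by positivity)]
  simp_rw [wk, h, vand, h0]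
  rw [prod_prod_Ioi_mul_eq_prod_prod_off_diag fun j i => |x j - x i| ^ k]
  refine prod_congr rfl fun i _ => ?_
  rw [← prod_mul_prod_compl {i} fun j => if i = j then 1 else |x i - x j| ^ k]
  simp only [prod_singleton, if_true, one_mul]
  refine prod_congr rfl fun j hj => ?_
  rw [if_neg (by simpa [eq_comm] using hj), abs_sub_comm]

lemma vand_nonneg {n : ℕ} {k ε : ℝ} (hε : 0 ≤ ε) (x : Fin n → ℝ) : 0 ≤ vand k ε x := by
  refine prod_nonneg fun i _ => prod_nonneg fun j _ => ?_
  split_ifs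
  · exact zero_le_one
  · positivity

lemma continuous_vand {n : ℕ} {k : ℝ} (hk : 0 < k) (ε : ℝ) :
    Continuous (vand k ε : (Fin n → ℝ) → ℝ) := by
  unfold vand
  refine continuous_finsetProd _ fun i _ => continuous_finsetProd _ fun j _ => ?_
  split_ifs
  · exact continuous_const
  · exact Continuous.rpow_const (by fun_prop) fun _ => Or.inr (by positivity)

lemma continuous_vand_eps {n : ℕ} {k : ℝ} (hk : 0 < k) (x : Fin n → ℝ) :
    Continuous fun ε => vand k ε x := by
  unfold vand
  refine continuous_finsetProd _ fun i _ => continuous_finsetProd _ fun j _ => ?_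
  split_ifs
  · exact continuous_const
  · exact Continuous.rpow_const (by fun_prop) fun _ => Or.inr (by positivity)

lemma vand_comp_perm {n : ℕ} (k ε : ℝ) (x : Fin n → ℝ) (σ : Equiv.Perm (Fin n)) :
    vand k ε (x ∘ σ) = vand k ε x := by
  unfold vand
  rw [← Equiv.prod_comp σ (fun i => ∏ j, if i = j then 1 else ((x i - x j) ^ 2 + ε) ^ (k / 2))]
  refine prod_congr rfl fun i _ => ?_
  rw [← Equiv.prod_comp σ fun j => if σ i = j then 1 else ((x (σ i) - x j) ^ 2 + ε) ^ (k / 2)]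
  simp

lemma vand_eq_zero {n : ℕ} {k : ℝ} (hk : 0 < k) {x : Fin n → ℝ} {i j : Fin n} (hij : i ≠ j)
    (h : x i = x j) : vand k 0 x = 0 := by
  refine prod_eq_zero (mem_univ i) (prod_eq_zero (mem_univ j) ?_)
  rw [if_neg hij, h, sub_self]
  simpa using Real.zero_rpow (by positivity)

/-- The weight is dominated, uniformly in `ε`, by a product of exponentials: this is the source of
all integrability and dominated-convergence statements below. -/
lemma vand_le (n : ℕ) {k : ℝ} (hk : 0 < k) : ∃ K : ℝ, 0 < K ∧ ∀ ε ∈ Set.Icc (0 : ℝ) 1,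
    ∀ x : Fin n → ℝ, (∀ i, 0 ≤ x i) → vand k ε x ≤ ∏ j, (K * Real.exp (x j / 2)) := by
  set M : ℝ := k * (n * n) + 1 with hM
  have hM0 : 0 < M := by positivity
  refine ⟨(2 * M) ^ M * Real.exp (1 / 2), by positivity, fun ε hε x hx => ?_⟩
  set S : ℝ := ∏ j, (1 + x j) with hS
  have h1 : ∀ j, 1 + x j ≤ S := by
    intro j
    rw [hS, ← mul_prod_erase _ _ (mem_univ j)]
    refine le_mul_of_one_le_right (by linarith [hx j]) ?_
    exact Finset.one_le_prod fun i _ => by linarith [hx i]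
  have hS1 : 1 ≤ S := Finset.one_le_prod fun i _ => by linarith [hx i]
  have h2 : ∀ i j, (if i = j then 1 else ((x i - x j) ^ 2 + ε) ^ (k / 2)) ≤ S ^ k := by
    intro i j
    split_ifs
    · exact Real.one_le_rpow hS1 hk.le
    · have : (x i - x j) ^ 2 + ε ≤ S ^ 2 := by
        have := hx i; have := hx j; have := h1 i; have := h1 j; have := hε.2
        rcases le_total (x i) (x j) with h | h <;> nlinarith
      calc ((x i - x j) ^ 2 + ε) ^ (k / 2) ≤ (S ^ 2) ^ (k / 2) := by
            have := hε.1
            gcongr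
        _ = S ^ k := by
            rw [← Real.rpow_natCast, ← Real.rpow_mul (by positivity)]; congr 1; push_cast; ring
  have h3 : vand k ε x ≤ S ^ M := by
    calc vand k ε x ≤ ∏ i : Fin n, ∏ j : Fin n, S ^ k := by
          refine prod_le_prod (fun i _ => prod_nonneg fun j _ => ?_)
            fun i _ => prod_le_prod (fun j _ => ?_) fun j _ => h2 i j
          all_goals
            split_ifs
            · exact zero_le_one
            · have := hε.1; positivity
      _ = S ^ (k * (n * n)) := by
          simp only [prod_const, card_univ, Fintype.card_fin]
          rw [← pow_mul, ← Real.rpow_natCast, ← Real.rpow_mul (by positivity)]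
          push_cast; rfl
      _ ≤ S ^ M := Real.rpow_le_rpow_of_exponent_le hS1 (by linarith)
  refine h3.trans ?_
  rw [hS, ← Real.finsetProd_rpow _ _ fun i _ => by linarith [hx i]]
  refine prod_le_prod (fun i _ => Real.rpow_nonneg (by linarith [hx i]) _) fun i _ => ?_
  -- `1 + x ≤ 2M e^{(1 + x) / (2M)}`, raised to the power `M`
  have h4 : 1 + x i ≤ 2 * M * Real.exp ((1 + x i) / (2 * M)) := by
    have := Real.add_one_le_exp ((1 + x i) / (2 * M))
    calc 1 + x i = 2 * M * ((1 + x i) / (2 * M)) := by field_simp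
      _ ≤ _ := by gcongr; linarith
  calc (1 + x i) ^ M ≤ (2 * M * Real.exp ((1 + x i) / (2 * M))) ^ M :=
        Real.rpow_le_rpow (by linarith [hx i]) h4 hM0.le
    _ = (2 * M) ^ M * Real.exp (1 / 2) * Real.exp (x i / 2) := by
        rw [Real.mul_rpow (by positivity) (by positivity), ← Real.exp_mul, mul_assoc,
          ← Real.exp_add]
        congr 2; field_simp

/-- The integrable majorant of the densities `dens k ε b`, `0 ≤ ε ≤ 1`. -/
lemma dens_le (n : ℕ) {k : ℝ} (hk : 0 < k) : ∃ K : ℝ, 0 < K ∧ ∀ ε ∈ Set.Icc (0 : ℝ) 1,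
    ∀ b x : Fin n → ℝ, (∀ i, 0 ≤ x i) →
      dens k ε b x ≤ ∏ j, K * (x j ^ b j * Real.exp (-(1 / 2) * x j)) := by
  obtain ⟨K, hK, h⟩ := vand_le n hk
  refine ⟨K, hK, fun ε hε b x hx => ?_⟩
  calc dens k ε b x ≤ (∏ j, x j ^ b j * Real.exp (-x j)) * ∏ j, (K * Real.exp (x j / 2)) := by
        refine mul_le_mul_of_nonneg_left (h ε hε x hx) (prod_nonneg fun j _ => ?_)
        have := hx j; positivity
    _ = _ := by
        rw [← prod_mul_distrib]
        refine prod_congr rfl fun j _ => ?_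
        rw [show -x j = -(1 / 2) * x j - x j / 2 by ring, Real.exp_sub]
        field_simp

lemma dens_nonneg {n : ℕ} {k ε : ℝ} (hε : 0 ≤ ε) (b : Fin n → ℝ) {x : Fin n → ℝ}
    (hx : ∀ i, 0 ≤ x i) : 0 ≤ dens k ε b x := by
  refine mul_nonneg (prod_nonneg fun j _ => ?_) (vand_nonneg hε x)
  have := hx j; positivity

lemma measurable_dens {n : ℕ} {k : ℝ} (hk : 0 < k) (ε : ℝ) (b : Fin n → ℝ) :
    Measurable (dens k ε b) := by
  have := (continuous_vand (n := n) hk ε).measurable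
  unfold dens
  fun_prop

lemma integrableOn_majorant {n : ℕ} (K : ℝ) {b : Fin n → ℝ} (hb : ∀ i, -1 < b i) :
    IntegrableOn (fun x : Fin n → ℝ => ∏ j, K * (x j ^ b j * Real.exp (-(1 / 2) * x j)))
      (Rplus n) := by
  rw [Rplus_eq, IntegrableOn, volume_pi, Measure.restrict_pi_pi]
  refine Integrable.fintype_prod_dep
    (f := fun j (t : ℝ) => K * (t ^ b j * Real.exp (-(1 / 2) * t))) fun j => ?_
  have := integrableOn_rpow_mul_exp_neg_mul_rpow (hb j) (zero_lt_one) (one_half_pos (α := ℝ))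
  simp only [Real.rpow_one] at this
  exact this.const_mul K

lemma integrableOn_dens {n : ℕ} {k ε : ℝ} (hk : 0 < k) (hε : ε ∈ Set.Icc (0 : ℝ) 1)
    {b : Fin n → ℝ} (hb : ∀ i, -1 < b i) : IntegrableOn (dens k ε b) (Rplus n) := by
  obtain ⟨K, hK, h⟩ := dens_le n hk
  refine (integrableOn_majorant K hb).mono' (measurable_dens hk ε b).aestronglyMeasurable ?_
  filter_upwards [ae_restrict_mem (measurableSet_Rplus n)] with x hx
  rw [Real.norm_of_nonneg (dens_nonneg hε.1 b fun i => (hx i).le)]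
  exact h ε hε b x fun i => (hx i).le

/-- Dominated convergence as the regularisation is removed. -/
lemma tendsto_integral_dens {n : ℕ} {k : ℝ} (hk : 0 < k) {b : Fin n → ℝ} (hb : ∀ i, -1 < b i)
    (r : ℝ → (Fin n → ℝ) → ℝ) (hr : ∀ ε, Measurable (r ε)) (hr1 : ∀ ε ∈ Set.Ioc (0 : ℝ) 1,
      ∀ x, |r ε x| ≤ 1)
    (hlim : ∀ x, (∀ i, 0 < x i) →
      Tendsto (fun ε => dens k ε b x * r ε x) (𝓝[>] 0) (𝓝 (dens k 0 b x))) :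
    Tendsto (fun ε => ∫ x in Rplus n, dens k ε b x * r ε x) (𝓝[>] 0) (𝓝 (integ k 0 b)) := by
  obtain ⟨K, hK, h⟩ := dens_le n hk
  refine tendsto_integral_filter_of_dominated_convergence _ ?_ ?_ (integrableOn_majorant K hb) ?_
  · exact Eventually.of_forall fun ε =>
      ((measurable_dens hk ε b).mul (hr ε)).aestronglyMeasurable
  · filter_upwards [Ioc_mem_nhdsGT (zero_lt_one (α := ℝ))] with ε hε
    filter_upwards [ae_restrict_mem (measurableSet_Rplus n)] with x hx
    have hd := dens_nonneg (k := k) hε.1.le b fun i => (hx i).le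
    rw [norm_mul, Real.norm_of_nonneg hd, Real.norm_eq_abs]
    exact (mul_le_of_le_one_right hd (hr1 ε hε x)).trans
      (h ε ⟨hε.1.le, hε.2⟩ b x fun i => (hx i).le)
  · filter_upwards [ae_restrict_mem (measurableSet_Rplus n)] with x hx
    exact hlim x hx

lemma tendsto_dens {n : ℕ} {k : ℝ} (hk : 0 < k) (b x : Fin n → ℝ) :
    Tendsto (fun ε => dens k ε b x) (𝓝[>] 0) (𝓝 (dens k 0 b x)) :=
  (((continuous_vand_eps hk x).tendsto 0).mono_left nhdsWithin_le_nhds).const_mul _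

lemma tendsto_integ {n : ℕ} {k : ℝ} (hk : 0 < k) {b : Fin n → ℝ} (hb : ∀ i, -1 < b i) :
    Tendsto (fun ε => integ k ε b) (𝓝[>] 0) (𝓝 (integ k 0 b)) := by
  have := tendsto_integral_dens hk hb (fun _ _ => 1) (fun _ => measurable_const) (by simp)
    (fun x _ => by simpa using tendsto_dens hk b x)
  simpa [integ] using this

/-- Invariance of integrals over the orthant under permutations of the coordinates. -/
lemma integral_Rplus_comp_perm {n : ℕ} (f : (Fin n → ℝ) → ℝ) (σ : Equiv.Perm (Fin n)) :
    ∫ x in Rplus n, f (x ∘ σ) = ∫ x in Rplus n, f x := by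
  have h := volume_measurePreserving_piCongrLeft (fun _ : Fin n => ℝ) σ.symm
  have h2 := h.setIntegral_preimage_emb (MeasurableEquiv.measurableEmbedding _) f (Rplus n)
  have h3 : ∀ x : Fin n → ℝ, MeasurableEquiv.piCongrLeft (fun _ : Fin n => ℝ) σ.symm x = x ∘ σ := by
    intro x
    ext i
    simp [MeasurableEquiv.piCongrLeft, Equiv.piCongrLeft, Equiv.piCongrLeft']
  rw [← h2]
  simp_rw [h3]
  congr 2
  ext x
  simp only [Rplus, Set.mem_ofPred_eq, Set.mem_preimage, h3, Function.comp]
  exact ⟨fun h i => h _, fun h i => by simpa using h (σ.symm i)⟩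

lemma dens_comp_perm {n : ℕ} (k ε : ℝ) (b x : Fin n → ℝ) (σ : Equiv.Perm (Fin n)) :
    dens k ε (b ∘ σ) (x ∘ σ) = dens k ε b x := by
  unfold dens
  rw [vand_comp_perm, ← Equiv.prod_comp σ (fun j => x j ^ b j * Real.exp (-x j))]
  rfl

/-! ### Integration by parts in one coordinate -/

/-- Integration by parts in the coordinate `i` over the orthant, with boundary term. -/
lemma integral_Rplus_deriv {n : ℕ} (i : Fin (n + 1)) (F F' : (Fin (n + 1) → ℝ) → ℝ)
    (hint : IntegrableOn F' (Rplus (n + 1)))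
    (hcont : ∀ y ∈ Rplus n, ContinuousWithinAt (fun s => F (i.insertNth s y)) (Set.Ici 0) 0)
    (hderiv : ∀ y ∈ Rplus n, ∀ t > 0,
      HasDerivAt (fun s => F (i.insertNth s y)) (F' (i.insertNth t y)) t)
    (hlim : ∀ y ∈ Rplus n, Tendsto (fun s => F (i.insertNth s y)) atTop (𝓝 0)) :
    ∫ x in Rplus (n + 1), F' x = -∫ y in Rplus n, F (i.insertNth 0 y) := by
  have h := (volume_preserving_piFinSuccAbove (fun _ : Fin (n + 1) => ℝ) i).symm
  have hpre : (MeasurableEquiv.piFinSuccAbove (fun _ : Fin (n + 1) => ℝ) i).symm ⁻¹' Rplus (n + 1)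
      = Set.Ioi 0 ×ˢ Rplus n := by
    ext ⟨t, y⟩
    simp only [Set.mem_preimage, Rplus, Set.mem_ofPred_eq, Set.mem_prod, Set.mem_Ioi,
      MeasurableEquiv.piFinSuccAbove_symm_apply, Fin.insertNthEquiv_apply]
    rw [Fin.forall_iff_succAbove i]
    simp
  have hint2 : IntegrableOn (fun p : ℝ × (Fin n → ℝ) => F' (i.insertNth p.1 p.2))
      (Set.Ioi 0 ×ˢ Rplus n) := by
    have := (h.integrableOn_comp_preimage (MeasurableEquiv.measurableEmbedding _)
      (f := F') (s := Rplus (n + 1))).2 hint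
    rw [hpre] at this
    exact this
  have hint3 : Integrable (fun p : ℝ × (Fin n → ℝ) => F' (i.insertNth p.1 p.2))
      ((volume.restrict (Set.Ioi 0)).prod (volume.restrict (Rplus n))) := by
    rw [Measure.prod_restrict]; exact hint2
  rw [← h.setIntegral_preimage_emb (MeasurableEquiv.measurableEmbedding _), hpre]
  calc ∫ p in Set.Ioi 0 ×ˢ Rplus n, F' (i.insertNth p.1 p.2)
      = ∫ p, F' (i.insertNth p.1 p.2)
          ∂((volume.restrict (Set.Ioi 0)).prod (volume.restrict (Rplus n))) := by
        rw [Measure.prod_restrict]; rfl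
    _ = ∫ y in Rplus n, ∫ t in Set.Ioi 0, F' (i.insertNth t y) := integral_prod_symm _ hint3
    _ = ∫ y in Rplus n, -F (i.insertNth 0 y) := by
        refine integral_congr_ae ?_
        filter_upwards [hint3.prod_left_ae, ae_restrict_mem (measurableSet_Rplus n)] with y h1 hy
        rw [integral_Ioi_of_hasDerivAt_of_tendsto (hcont y hy) (fun t ht => hderiv y hy t ht) h1
          (hlim y hy), zero_sub]
    _ = _ := integral_neg _

/-- The regularised kernel `1 / (x_i - x_j)`: the derivative of `log (vand k ε)` in `x_i` is
`2k ∑_j ker ε i j`. It vanishes for `i = j`. -/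
noncomputable def ker {n : ℕ} (ε : ℝ) (i j : Fin n) (x : Fin n → ℝ) : ℝ :=
  (x i - x j) / ((x i - x j) ^ 2 + ε)

lemma ker_anti {n : ℕ} (ε : ℝ) (i j : Fin n) (x : Fin n → ℝ) : ker ε j i x = -ker ε i j x := by
  unfold ker
  rw [← neg_sub (x i) (x j), neg_sq, neg_div]

/-- Logarithmic differentiation of a finite product. -/
lemma hasDerivAt_prod_log {ι : Type*} (s : Finset ι) (f : ι → ℝ → ℝ) (g : ι → ℝ)
    (t : ℝ) (h : ∀ i ∈ s, HasDerivAt (f i) (f i t * g i) t) :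
    HasDerivAt (fun u => ∏ i ∈ s, f i u) ((∏ i ∈ s, f i t) * ∑ i ∈ s, g i) t := by
  classical
  refine (HasDerivAt.fun_finsetProd h).congr_deriv (Eq.symm ?_)
  rw [mul_sum]
  refine sum_congr rfl fun i hi => ?_
  rw [smul_eq_mul, ← mul_assoc, prod_erase_mul _ _ hi]

lemma hasDerivAt_vand {n : ℕ} {k ε : ℝ} (hε : 0 < ε) (i : Fin n) (x : Fin n → ℝ) :
    HasDerivAt (fun s => vand k ε (Function.update x i s))
      (vand k ε x * (2 * k * ∑ j, ker ε i j x)) (x i) := by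
  have hu : ∀ j, HasDerivAt (fun s => Function.update x i s j) (if j = i then 1 else 0) (x i) := by
    intro j
    have := hasDerivAt_pi.1 (hasDerivAt_update x i (x i)) j
    simpa [Pi.single_apply] using this
  have hfac : ∀ p q : Fin n, HasDerivAt (fun s => if p = q then (1 : ℝ) else
      ((Function.update x i s p - Function.update x i s q) ^ 2 + ε) ^ (k / 2))
      ((if p = q then (1 : ℝ) else ((Function.update x i (x i) p
        - Function.update x i (x i) q) ^ 2 + ε) ^ (k / 2)) *
        (k * ker ε p q x * ((if p = i then 1 else 0) - (if q = i then 1 else 0)))) (x i) := by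
    intro p q
    by_cases hpq : p = q
    · subst hpq; simpa using hasDerivAt_const (x i) (1 : ℝ)
    · simp only [if_neg hpq]
      have h1 := (((hu p).sub (hu q)).pow 2).add_const ε
      have hpos : 0 < (x p - x q) ^ 2 + ε := by positivity
      have h2 := h1.rpow_const (p := k / 2) (Or.inl (by simpa using hpos.ne'))
      refine h2.congr_deriv ?_
      simp only [Function.update_eq_self, Pi.sub_apply, Pi.pow_apply]
      rw [Real.rpow_sub_one hpos.ne', ker]
      field_simp
      push_cast
      ring
  have h := hasDerivAt_prod_log univ _ _ (x i) fun p _ =>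
    hasDerivAt_prod_log univ _ _ (x i) fun q _ => hfac p q
  unfold vand
  refine h.congr_deriv ?_
  simp only [Function.update_eq_self]
  congr 1
  simp only [mul_sub, sum_sub_distrib, mul_ite, mul_one, mul_zero]
  rw [sum_comm]
  simp only [sum_ite_eq', mem_univ, if_true]
  rw [← sum_sub_distrib, mul_sum]
  refine sum_congr rfl fun j _ => ?_
  rw [ker_anti ε i j]
  ring

lemma dens_update {n : ℕ} (k ε : ℝ) (b : Fin n → ℝ) (i : Fin n) (x : Fin n → ℝ) (hx : 0 < x i) :
    dens k ε (Function.update b i (b i - 1)) x = dens k ε b x / x i := by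
  unfold dens
  rw [← mul_prod_erase _ _ (mem_univ i), ← mul_prod_erase univ
    (fun j => x j ^ b j * Real.exp (-x j)) (mem_univ i), Function.update_self,
    Real.rpow_sub_one hx.ne']
  rw [prod_congr rfl fun j hj => by rw [Function.update_of_ne (ne_of_mem_erase hj)]]
  field_simp

lemma hasDerivAt_dens {n : ℕ} {k ε : ℝ} (hε : 0 < ε) (b : Fin n → ℝ) (i : Fin n)
    (x : Fin n → ℝ) (hx : 0 < x i) :
    HasDerivAt (fun s => dens k ε b (Function.update x i s))
      (b i * dens k ε (Function.update b i (b i - 1)) x - dens k ε b x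
        + 2 * k * ∑ j, ker ε i j x * dens k ε b x) (x i) := by
  have h1 : HasDerivAt (fun s => ∏ j, Function.update x i s j ^ b j *
      Real.exp (-Function.update x i s j))
      ((∏ j, Function.update x i (x i) j ^ b j * Real.exp (-Function.update x i (x i) j)) *
        ∑ j, if j = i then b i / x i - 1 else 0) (x i) := by
    refine hasDerivAt_prod_log univ _ _ (x i) fun j _ => ?_
    by_cases hj : j = i
    · subst hj
      simp only [Function.update_self, if_true]
      have h2 := (Real.hasDerivAt_rpow_const (x := x j) (p := b j) (Or.inl hx.ne')).mul
        (hasDerivAt_id (x j)).neg.exp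
      refine h2.congr_deriv ?_
      simp only [id, Pi.neg_apply]
      rw [Real.rpow_sub_one hx.ne']
      field_simp
      ring
    · simpa [hj] using hasDerivAt_const (x i) _
  refine (h1.mul (hasDerivAt_vand hε i x)).congr_deriv ?_
  rw [dens_update k ε b i x hx, ← sum_mul]
  simp only [Function.update_eq_self, sum_ite_eq', mem_univ, if_true]
  unfold dens
  field_simp

lemma abs_ker_le {n : ℕ} {ε : ℝ} (hε : 0 < ε) (i j : Fin n) (x : Fin n → ℝ) :
    |ker ε i j x| ≤ 1 / ε + 1 := by
  have hpos : 0 < (x i - x j) ^ 2 + ε := by positivity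
  rw [ker, abs_div, abs_of_pos hpos, div_le_iff₀ hpos]
  have h1 : |x i - x j| ≤ (x i - x j) ^ 2 + 1 := by
    rw [← sq_abs]; nlinarith [sq_nonneg (|x i - x j| - 1 / 2)]
  have h2 : 1 / ε * ε = 1 := by field_simp
  have h3 : 0 ≤ 1 / ε * (x i - x j) ^ 2 := by positivity
  nlinarith

lemma measurable_ker {n : ℕ} (ε : ℝ) (i j : Fin n) : Measurable (ker ε i j) := by
  unfold ker; fun_prop

lemma integrableOn_ker_dens {n : ℕ} {k ε : ℝ} (hk : 0 < k) (hε : ε ∈ Set.Ioc (0 : ℝ) 1)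
    {b : Fin n → ℝ} (hb : ∀ i, -1 < b i) (i j : Fin n) :
    IntegrableOn (fun x => ker ε i j x * dens k ε b x) (Rplus n) :=
  (integrableOn_dens hk ⟨hε.1.le, hε.2⟩ hb).bdd_mul (measurable_ker ε i j).aestronglyMeasurable
    (Eventually.of_forall fun x => abs_ker_le hε.1 i j x)

/-- The regularised integral of the kernel against the density. -/
noncomputable def kint {n : ℕ} (k ε : ℝ) (b : Fin n → ℝ) (i j : Fin n) : ℝ :=
  ∫ x in Rplus n, ker ε i j x * dens k ε b x

/-- The integrated form of `∂_i (dens k ε b)`. The case `b i = 0` is included: there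
`dens k ε (b - e_i)` is not integrable, but its coefficient vanishes, and the boundary term is
nonzero. -/
lemma ibp_dens {n : ℕ} {k ε : ℝ} (hk : 0 < k) (hε : ε ∈ Set.Ioc (0 : ℝ) 1)
    {b : Fin (n + 1) → ℝ} (hb : ∀ i, -1 < b i) (i : Fin (n + 1)) (hbi : 0 ≤ b i) :
    b i * integ k ε (Function.update b i (b i - 1)) - integ k ε b + 2 * k * ∑ j, kint k ε b i j
      = -∫ y in Rplus n, dens k ε b (i.insertNth 0 y) := by
  have hε' : ε ∈ Set.Icc (0 : ℝ) 1 := ⟨hε.1.le, hε.2⟩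
  have hI1 : IntegrableOn (fun x => b i * dens k ε (Function.update b i (b i - 1)) x)
      (Rplus (n + 1)) := by
    rcases hbi.eq_or_lt with h0 | h0
    · simp [← h0]
    · refine (integrableOn_dens hk hε' fun j => ?_).const_mul _
      by_cases hj : j = i
      · subst hj; rw [Function.update_self]; linarith
      · rw [Function.update_of_ne hj]; exact hb j
  have hI2 := integrableOn_dens hk hε' hb
  have hI3 : IntegrableOn (fun x => 2 * k * ∑ j, ker ε i j x * dens k ε b x) (Rplus (n + 1)) :=
    (integrable_finsetSum _ fun j _ => integrableOn_ker_dens hk hε hb i j).const_mul _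
  rw [← integral_Rplus_deriv i (dens k ε b) _ ((hI1.sub hI2).add hI3) ?_ ?_ ?_]
  · have e1 := integral_add (hI1.sub hI2) hI3
    have e2 := integral_sub hI1 hI2
    simp only [Pi.sub_apply] at e1
    simp only [Pi.add_apply, Pi.sub_apply]
    rw [e1, e2, integral_const_mul,
      integral_const_mul, integral_finsetSum _ fun j _ => integrableOn_ker_dens hk hε hb i j]
    rfl
  · intro y hy
    have hc : Continuous fun s => vand k ε (i.insertNth s y : Fin (n + 1) → ℝ) :=
      (continuous_vand hk ε).comp (by fun_prop)
    refine ContinuousWithinAt.mul ?_ hc.continuousWithinAt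
    refine Continuous.continuousWithinAt ?_
    refine continuous_finsetProd _ fun j _ => Continuous.mul ?_ ?_
    · rcases Fin.eq_self_or_eq_succAbove i j with rfl | ⟨l, rfl⟩
      · simp only [Fin.insertNth_apply_same]
        exact Real.continuous_rpow_const hbi
      · simp only [Fin.insertNth_apply_succAbove]; exact continuous_const
    · fun_prop
  · intro y hy t ht
    have := hasDerivAt_dens (k := k) hε.1 b i (i.insertNth t y) (by simpa using ht)
    simpa using this
  · intro y hy
    obtain ⟨K, hK, hle⟩ := dens_le (n + 1) hk
    have hx : ∀ s > 0, ∀ j, 0 ≤ (i.insertNth s y : Fin (n + 1) → ℝ) j := by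
      intro s hs j
      rcases Fin.eq_self_or_eq_succAbove i j with rfl | ⟨l, rfl⟩
      · simpa using hs.le
      · simpa using (hy l).le
    have hz : Tendsto (fun s : ℝ => K * (s ^ b i * Real.exp (-(1 / 2) * s)) *
        ∏ l, K * (y l ^ b (i.succAbove l) * Real.exp (-(1 / 2) * y l))) atTop (𝓝 0) := by
      have := ((tendsto_rpow_mul_exp_neg_mul_atTop_nhds_zero (b i) (1 / 2) (by norm_num)).const_mul
        K).mul_const (∏ l, K * (y l ^ b (i.succAbove l) * Real.exp (-(1 / 2) * y l)))
      simpa using this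
    refine tendsto_of_tendsto_of_tendsto_of_le_of_le' tendsto_const_nhds hz ?_ ?_
    · filter_upwards [eventually_gt_atTop 0] with s hs
      exact dens_nonneg hε.1.le b (hx s hs)
    · filter_upwards [eventually_gt_atTop 0] with s hs
      have := hle ε hε' b _ (hx s hs)
      rw [Fin.prod_univ_succAbove _ i] at this
      simpa using this

/-! ### Symmetrisation and Aomoto's recursion -/

lemma dens_comp_swap {n : ℕ} (k ε : ℝ) (b x : Fin n → ℝ) (i j : Fin n) :
    dens k ε b (x ∘ Equiv.swap i j) = dens k ε (b ∘ Equiv.swap i j) x := by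
  rw [← dens_comp_perm k ε (b ∘ Equiv.swap i j) x (Equiv.swap i j)]
  congr 1
  ext l; simp

/-- The kernel integral changes sign when the exponents of `x_i` and `x_j` are exchanged. -/
lemma kint_swap {n : ℕ} (k ε : ℝ) (b : Fin n → ℝ) (i j : Fin n) :
    kint k ε (b ∘ Equiv.swap i j) i j = -kint k ε b i j := by
  unfold kint
  rw [← integral_Rplus_comp_perm (fun x => ker ε i j x * dens k ε b x) (Equiv.swap i j),
    ← integral_neg]
  refine integral_congr_ae (ae_of_all _ fun x => ?_)
  have : ker ε i j (x ∘ Equiv.swap i j) = ker ε j i x := by simp [ker]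
  simp only [dens_comp_swap, this, ker_anti ε i j]
  ring

/-- By antisymmetry, variables with equal exponents do not interact. -/
lemma kint_eq_zero {n : ℕ} (k ε : ℝ) {b : Fin n → ℝ} {i j : Fin n} (h : b i = b j) :
    kint k ε b i j = 0 := by
  have h1 := kint_swap k ε b i j
  have h2 : b ∘ Equiv.swap i j = b := by
    ext l
    simp only [Function.comp, Equiv.swap_apply_def]
    split_ifs with h3 h4 <;> simp_all
  rw [h2] at h1
  linarith

/-- If `b_i = b_j + 1`, symmetrising in `x_i, x_j` replaces the kernel by the bounded factor
`(x_i - x_j)² / ((x_i - x_j)² + ε)`, half of which remains. -/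
lemma kint_eq_half {n : ℕ} {k ε : ℝ} (hk : 0 < k) (hε : ε ∈ Set.Ioc (0 : ℝ) 1)
    {b : Fin n → ℝ} (hb : ∀ i, -1 < b i) {i j : Fin n} (h : b j = b i - 1) :
    2 * kint k ε b i j = ∫ x in Rplus n, dens k ε (Function.update b i (b i - 1)) x *
      ((x i - x j) ^ 2 / ((x i - x j) ^ 2 + ε)) := by
  have h1 : 2 * kint k ε b i j = kint k ε b i j - kint k ε (b ∘ Equiv.swap i j) i j := by
    rw [kint_swap]; ring
  have hij : i ≠ j := by rintro rfl; linarith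
  rw [h1, kint, kint, ← integral_sub (integrableOn_ker_dens hk hε hb i j)
    (integrableOn_ker_dens hk hε (b := b ∘ Equiv.swap i j) (fun l => hb _) i j)]
  refine setIntegral_congr_fun (measurableSet_Rplus n) fun x hx => ?_
  have e1 := dens_update k ε b i x (hx i)
  have e2 := dens_update k ε (b ∘ Equiv.swap i j) j x (hx j)
  have e3 : Function.update (b ∘ Equiv.swap i j) j ((b ∘ Equiv.swap i j) j - 1)
      = Function.update b i (b i - 1) := by
    ext l
    simp only [Function.update_apply, Function.comp, Equiv.swap_apply_right]
    by_cases hli : l = i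
    · subst hli; simp [hij, h]
    · by_cases hlj : l = j
      · subst hlj; simp [hli, h]
      · simp [hli, hlj, Equiv.swap_apply_of_ne_of_ne]
  rw [e3, eq_div_iff (hx j).ne'] at e2
  rw [eq_div_iff (hx i).ne'] at e1
  have := hε.1
  simp only [← e1, ← e2, ker]
  field_simp

/-- Aomoto's recursion: raising the exponent of `x_i` to `b_i`, when the variables outside `T`
already have exponent `b_i` and those in `T` have exponent `b_i - 1`. -/
lemma aomoto_step {n : ℕ} {k : ℝ} (hk : 0 < k) {b : Fin (n + 1) → ℝ} (hb : ∀ i, -1 < b i)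
    (i : Fin (n + 1)) (hbi : 0 < b i) (T : Finset (Fin (n + 1)))
    (hT : ∀ j ∈ T, b j = b i - 1) (hT' : ∀ j ∉ T, b j = b i) :
    integ k 0 b = (b i + k * #T) * integ k 0 (Function.update b i (b i - 1)) := by
  set b' := Function.update b i (b i - 1) with hb'
  have hb1 : ∀ j, -1 < b' j := by
    intro j
    by_cases hj : j = i
    · subst hj; rw [hb', Function.update_self]; linarith
    · rw [hb', Function.update_of_ne hj]; exact hb j
  set R : ℝ → Fin (n + 1) → ℝ := fun ε j => ∫ x in Rplus (n + 1), dens k ε b' x *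
      ((x i - x j) ^ 2 / ((x i - x j) ^ 2 + ε)) with hR
  have key : ∀ ε ∈ Set.Ioc (0 : ℝ) 1,
      integ k ε b = b i * integ k ε b' + k * ∑ j ∈ T, R ε j := by
    intro ε hε
    have h := ibp_dens hk hε hb i hbi.le
    -- the power `x_i ^ b_i` with `b_i > 0` removes the boundary term
    have hbd : ∀ y : Fin n → ℝ, dens k ε b (i.insertNth 0 y) = 0 := by
      intro y
      refine mul_eq_zero_of_left (prod_eq_zero (mem_univ i) ?_) _
      simp [Real.zero_rpow hbi.ne']
    simp only [hbd, integral_zero, neg_zero] at h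
    have hs : 2 * ∑ j, kint k ε b i j = ∑ j ∈ T, R ε j := by
      rw [← sum_subset (subset_univ T) fun j _ hj => kint_eq_zero k ε (hT' j hj).symm, mul_sum]
      exact sum_congr rfl fun j hj => kint_eq_half hk hε hb (hT j hj)
    rw [← hs]; linarith
  have hRlim : ∀ j ∈ T, Tendsto (fun ε => R ε j) (𝓝[>] 0) (𝓝 (integ k 0 b')) := by
    intro j hj
    have hij : i ≠ j := by rintro rfl; linarith [hT i hj]
    refine tendsto_integral_dens hk hb1
      (fun ε x => (x i - x j) ^ 2 / ((x i - x j) ^ 2 + ε)) (fun ε => by fun_prop) ?_ ?_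
    · intro ε hε x
      have := hε.1
      rw [abs_of_nonneg (by positivity)]
      exact div_le_one_of_le₀ (by linarith) (by positivity)
    · intro x hx
      by_cases hxx : x i = x j
      · have : dens k 0 b' x = 0 := by rw [dens, vand_eq_zero hk hij hxx, mul_zero]
        simp [hxx, this]
      · have h0 : (x i - x j) ^ 2 ≠ 0 := pow_ne_zero _ (sub_ne_zero.2 hxx)
        have h1 : Tendsto (fun ε : ℝ => (x i - x j) ^ 2 / ((x i - x j) ^ 2 + ε)) (𝓝[>] 0)
            (𝓝 ((x i - x j) ^ 2 / ((x i - x j) ^ 2 + 0))) := by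
          refine Tendsto.mono_left ?_ nhdsWithin_le_nhds
          exact tendsto_const_nhds.div (tendsto_const_nhds.add tendsto_id) (by simpa using h0)
        have := (tendsto_dens hk b' x).mul h1
        rwa [add_zero, div_self h0, mul_one] at this
  have hlim : Tendsto (fun ε => b i * integ k ε b' + k * ∑ j ∈ T, R ε j) (𝓝[>] 0)
      (𝓝 (b i * integ k 0 b' + k * ∑ j ∈ T, integ k 0 b')) :=
    ((tendsto_integ hk hb1).const_mul _).add ((tendsto_finsetSum _ hRlim).const_mul _)
  have := tendsto_nhds_unique (tendsto_integ hk hb) (hlim.congr' ?_)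
  · rw [this, sum_const, nsmul_eq_mul]; ring
  · filter_upwards [Ioc_mem_nhdsGT (zero_lt_one (α := ℝ))] with ε hε
    exact (key ε hε).symm

/-- The functional equation of the Selberg integral in the exponent. -/
lemma integ_add_one (n : ℕ) {k : ℝ} (hk : 0 < k) {a : ℝ} (ha : 0 < a) :
    integ k 0 (fun _ : Fin n => a)
      = (∏ m ∈ range n, (a + k * m)) * integ k 0 (fun _ : Fin n => a - 1) := by
  rcases n with _ | n
  · simp only [range_zero, prod_empty, one_mul]
    congr 1; ext i; exact i.elim0
  -- the exponents are raised one variable at a time; `S` is the set of variables already raised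
  have h : ∀ S : Finset (Fin (n + 1)), integ k 0 (fun j => if j ∈ S then a else a - 1)
      = (∏ m ∈ range #S, (a + k * ((n : ℝ) - m))) * integ k 0 (fun _ : Fin (n + 1) => a - 1) := by
    intro S
    induction S using Finset.induction_on with
    | empty => simp
    | insert i S hi ih =>
      rw [aomoto_step hk (b := fun j => if j ∈ insert i S then a else a - 1) ?_ i ?_
        (insert i S)ᶜ ?_ ?_]
      · have e : Function.update (fun j => if j ∈ insert i S then a else a - 1) i
            ((if i ∈ insert i S then a else a - 1) - 1) = fun j => if j ∈ S then a else a - 1 := by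
          ext l
          by_cases hl : l = i
          · subst hl; simp [hi]
          · simp [hl]
        rw [e, ih, card_insert_of_notMem hi, prod_range_succ, card_compl, card_insert_of_notMem hi,
          Fintype.card_fin]
        have hc : #S ≤ n := by
          have := card_le_univ (insert i S)
          rw [card_insert_of_notMem hi, Fintype.card_fin] at this
          omega
        rw [Nat.add_sub_add_right, Nat.cast_sub hc]
        simp only [mem_insert_self, if_true]
        ring
      · intro j; split_ifs <;> linarith
      · simpa using ha
      · intro j hj; simp only [mem_compl] at hj; simp [hj]
      · intro j hj; simp only [mem_compl, not_not] at hj; simp [hj]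
  have := h univ
  simp only [mem_univ, if_true, card_univ, Fintype.card_fin] at this
  rw [this, ← prod_range_reflect (fun m => a + k * (m : ℝ))]
  congr 1
  refine prod_congr rfl fun m hm => ?_
  have : m ≤ n := by simpa [Nat.lt_succ_iff] using hm
  rw [Nat.add_sub_cancel, Nat.cast_sub this]

/-- Freezing the first variable at `0` turns its interaction factors into extra exponents `2k`. -/
lemma dens_insertNth_zero {n : ℕ} {k : ℝ} (y : Fin n → ℝ) (hy : ∀ i, 0 < y i) :
    dens k 0 0 ((0 : Fin (n + 1)).insertNth 0 y) = dens k 0 (fun _ => 2 * k) y := by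
  have h0 : ∀ t : ℝ, 0 < t → (t ^ 2) ^ (k / 2) = t ^ k := by
    intro t ht
    rw [← Real.rpow_natCast, ← Real.rpow_mul ht.le]
    congr 1; push_cast; ring
  unfold dens vand
  simp only [Fin.insertNth_zero', Fin.prod_univ_succ, Fin.cons_zero, Fin.cons_succ,
    Pi.zero_apply, Real.rpow_zero, neg_zero, Real.exp_zero, one_mul, if_true, zero_sub, sub_zero,
    neg_sq, add_zero, (Fin.succ_ne_zero _), (Fin.succ_ne_zero _).symm, if_false, Fin.succ_inj,
    prod_mul_distrib, h0 _ (hy _), two_mul k, Real.rpow_add (hy _)]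
  ring

/-- The value at exponent `0` in `n + 1` variables: integrating `∂_0` of the weight `ω_k` with no
power factor leaves only the boundary term at `x_0 = 0`. -/
lemma integ_zero_succ (n : ℕ) {k : ℝ} (hk : 0 < k) :
    integ k 0 (fun _ : Fin (n + 1) => (0 : ℝ)) = integ k 0 (fun _ : Fin n => 2 * k) := by
  have key : ∀ ε ∈ Set.Ioc (0 : ℝ) 1, integ k ε (fun _ : Fin (n + 1) => (0 : ℝ))
      = ∫ y in Rplus n, dens k ε 0 ((0 : Fin (n + 1)).insertNth 0 y) := by
    intro ε hε
    have h := ibp_dens hk hε (b := fun _ : Fin (n + 1) => (0 : ℝ)) (fun _ => by norm_num) 0 le_rfl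
    simp only [kint_eq_zero, sum_const_zero, zero_mul, mul_zero, add_zero, zero_sub] at h
    exact neg_injective h
  obtain ⟨K, hK, hle⟩ := dens_le (n + 1) hk
  have hpos : ∀ y ∈ Rplus n, ∀ j, 0 ≤ ((0 : Fin (n + 1)).insertNth 0 y : Fin (n + 1) → ℝ) j := by
    intro y hy j
    rcases Fin.eq_self_or_eq_succAbove 0 j with rfl | ⟨l, rfl⟩
    · simp
    · simpa using (hy l).le
  have hlim : Tendsto (fun ε => ∫ y in Rplus n, dens k ε 0 ((0 : Fin (n + 1)).insertNth 0 y))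
      (𝓝[>] 0) (𝓝 (integ k 0 (fun _ : Fin n => 2 * k))) := by
    refine tendsto_integral_filter_of_dominated_convergence
      (fun y => K * ∏ j, K * (y j ^ (0 : ℝ) * Real.exp (-(1 / 2) * y j))) ?_ ?_ ?_ ?_
    · refine Eventually.of_forall fun ε => Measurable.aestronglyMeasurable ?_
      exact (measurable_dens hk ε 0).comp (by fun_prop)
    · filter_upwards [Ioc_mem_nhdsGT (zero_lt_one (α := ℝ))] with ε hε
      filter_upwards [ae_restrict_mem (measurableSet_Rplus n)] with y hy
      rw [Real.norm_of_nonneg (dens_nonneg hε.1.le _ (hpos y hy))]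
      have := hle ε ⟨hε.1.le, hε.2⟩ 0 _ (hpos y hy)
      rw [Fin.prod_univ_succAbove _ 0] at this
      simpa using this
    · exact (integrableOn_majorant K (b := fun _ : Fin n => (0 : ℝ))
        fun _ => by norm_num).const_mul K
    · filter_upwards [ae_restrict_mem (measurableSet_Rplus n)] with y hy
      rw [← dens_insertNth_zero y hy]
      exact tendsto_dens hk _ _
  refine tendsto_nhds_unique (tendsto_integ hk fun _ => by norm_num) (hlim.congr' ?_)
  filter_upwards [Ioc_mem_nhdsGT (zero_lt_one (α := ℝ))] with ε hε
  exact (key ε hε).symm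

/-! ### Log-convexity and real exponents -/

lemma integ_pos {n : ℕ} {k : ℝ} (hk : 0 < k) {b : Fin n → ℝ} (hb : ∀ i, -1 < b i) :
    0 < integ k 0 b := by
  have hnn : 0 ≤ᵐ[volume.restrict (Rplus n)] dens k 0 b := by
    filter_upwards [ae_restrict_mem (measurableSet_Rplus n)] with x hx
    exact dens_nonneg le_rfl b fun i => (hx i).le
  rw [integ, setIntegral_pos_iff_support_of_nonneg_ae hnn
    (integrableOn_dens hk ⟨le_rfl, zero_le_one⟩ hb)]
  have hopen : IsOpen (Rplus n ∩ {x | vand k 0 x ≠ 0}) := by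
    refine IsOpen.inter ?_ (isOpen_ne_fun (continuous_vand hk 0) continuous_const)
    rw [Rplus_eq]
    exact isOpen_set_pi Set.finite_univ fun _ _ => isOpen_Ioi
  have hne : (Rplus n ∩ {x | vand k 0 x ≠ 0}).Nonempty := by
    refine ⟨fun i => (i : ℝ) + 1, fun i => by positivity, ?_⟩
    refine prod_ne_zero_iff.2 fun i _ => prod_ne_zero_iff.2 fun j _ => ?_
    split_ifs with h
    · exact one_ne_zero
    · have h1 : ((i : ℝ) + 1) - ((j : ℝ) + 1) ≠ 0 := by
        rw [add_sub_add_right_eq_sub, sub_ne_zero, Ne, Nat.cast_inj]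
        exact fun h2 => h (Fin.ext h2)
      have : 0 < (((i : ℝ) + 1) - ((j : ℝ) + 1)) ^ 2 := by positivity
      rw [add_zero]
      positivity
  refine (hopen.measure_pos volume hne).trans_le (measure_mono fun x hx => ⟨?_, hx.1⟩)
  refine mul_ne_zero (prod_ne_zero_iff.2 fun j _ => ?_) hx.2
  have := hx.1 j
  positivity

lemma dens_convex_comb {n : ℕ} {k θ η : ℝ} (hs : θ + η = 1)
    (b c : Fin n → ℝ) {x : Fin n → ℝ} (hx : ∀ i, 0 < x i) :
    dens k 0 (fun j => θ * b j + η * c j) x = dens k 0 b x ^ θ * dens k 0 c x ^ η := by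
  have hp : ∀ d : Fin n → ℝ, 0 ≤ ∏ j, x j ^ d j * Real.exp (-x j) := fun d =>
    prod_nonneg fun j _ => by have := hx j; positivity
  have hv := vand_nonneg (k := k) le_rfl x
  have hv2 : vand k 0 x = vand k 0 x ^ θ * vand k 0 x ^ η := by
    rw [← Real.rpow_add' hv (by rw [hs]; exact one_ne_zero), hs, Real.rpow_one]
  unfold dens
  rw [Real.mul_rpow (hp b) hv, Real.mul_rpow (hp c) hv, mul_mul_mul_comm, ← hv2,
    ← Real.finsetProd_rpow _ _ fun j _ => by have := hx j; positivity,
    ← Real.finsetProd_rpow _ _ fun j _ => by have := hx j; positivity, ← prod_mul_distrib]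
  congr 1
  refine prod_congr rfl fun j _ => ?_
  have hj := hx j
  rw [Real.mul_rpow (by positivity) (by positivity), Real.mul_rpow (by positivity) (by positivity),
    ← Real.rpow_mul hj.le, ← Real.rpow_mul hj.le, ← Real.exp_mul, ← Real.exp_mul,
    mul_mul_mul_comm, ← Real.rpow_add hj, ← Real.exp_add, ← mul_add, hs, mul_one]
  simp only [mul_comm θ, mul_comm η]

/-- Log-convexity in the exponent: Hölder's inequality, obtained from the weighted arithmetic-
geometric mean inequality for the normalised densities. -/
lemma convexOn_log_integ (n : ℕ) {k : ℝ} (hk : 0 < k) :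
    ConvexOn ℝ (Set.Ioi 0) fun a => Real.log (integ k 0 fun _ : Fin n => a - 1) := by
  refine convexOn_iff_forall_pos.2 ⟨convex_Ioi 0, fun a ha c hc θ η hθ hη hs => ?_⟩
  simp only [Set.mem_Ioi] at ha hc
  have hb1 : ∀ i : Fin n, -1 < (fun _ : Fin n => a - 1) i := fun _ => by linarith
  have hc1 : ∀ i : Fin n, -1 < (fun _ : Fin n => c - 1) i := fun _ => by linarith
  set A := integ k 0 fun _ : Fin n => a - 1 with hA
  set B := integ k 0 fun _ : Fin n => c - 1 with hB
  have hA0 : 0 < A := integ_pos hk hb1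
  have hB0 : 0 < B := integ_pos hk hc1
  have hIa := integrableOn_dens (ε := 0) hk ⟨le_rfl, zero_le_one⟩ hb1
  have hIc := integrableOn_dens (ε := 0) hk ⟨le_rfl, zero_le_one⟩ hc1
  have he : (fun _ : Fin n => θ • a + η • c - 1) = fun _ => θ * (a - 1) + η * (c - 1) := by
    ext; simp only [smul_eq_mul]; linear_combination hs
  have hpos : 0 < integ k 0 (fun _ : Fin n => θ * (a - 1) + η * (c - 1)) :=
    integ_pos hk fun _ => by nlinarith
  have hle : integ k 0 (fun _ : Fin n => θ * (a - 1) + η * (c - 1)) ≤ A ^ θ * B ^ η := by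
    have h1 : ∀ x ∈ Rplus n, dens k 0 (fun _ : Fin n => θ * (a - 1) + η * (c - 1)) x ≤
        A ^ θ * B ^ η * (θ * (dens k 0 (fun _ => a - 1) x / A)
          + η * (dens k 0 (fun _ => c - 1) x / B)) := by
      intro x hx
      have hda := dens_nonneg (k := k) le_rfl (fun _ : Fin n => a - 1) fun i => (hx i).le
      have hdc := dens_nonneg (k := k) le_rfl (fun _ : Fin n => c - 1) fun i => (hx i).le
      have hgm := Real.geom_mean_le_arith_mean2_weighted hθ.le hη.le (div_nonneg hda hA0.le)
        (div_nonneg hdc hB0.le) hs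
      rw [dens_convex_comb hs _ _ hx]
      refine le_trans (le_of_eq ?_) (mul_le_mul_of_nonneg_left hgm (by positivity))
      rw [Real.div_rpow hda hA0.le, Real.div_rpow hdc hB0.le]
      field_simp
    have h2 : IntegrableOn (fun x => A ^ θ * B ^ η * (θ * (dens k 0 (fun _ => a - 1) x / A)
        + η * (dens k 0 (fun _ => c - 1) x / B))) (Rplus n) :=
      (((hIa.div_const A).const_mul θ).add ((hIc.div_const B).const_mul η)).const_mul _
    refine (setIntegral_mono_on (integrableOn_dens hk ⟨le_rfl, zero_le_one⟩
      fun _ => by nlinarith) h2 (measurableSet_Rplus n) h1).trans (le_of_eq ?_)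
    rw [integral_const_mul, integral_add ((hIa.div_const A).const_mul θ)
      ((hIc.div_const B).const_mul η), integral_const_mul, integral_const_mul, integral_div,
      integral_div]
    change A ^ θ * B ^ η * (θ * (A / A) + η * (B / B)) = _
    rw [div_self hA0.ne', div_self hB0.ne', mul_one, mul_one, hs, mul_one]
  rw [he]
  calc Real.log (integ k 0 (fun _ : Fin n => θ * (a - 1) + η * (c - 1)))
      ≤ Real.log (A ^ θ * B ^ η) := Real.log_le_log hpos hle
    _ = _ := by
      rw [Real.log_mul (by positivity) (by positivity), Real.log_rpow hA0, Real.log_rpow hB0,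
        smul_eq_mul, smul_eq_mul]

/-- A Bohr–Mollerup principle: two convex functions on `(0, ∞)` with the same increments
`f (a + 1) - f a = ψ a`, where `ψ (a + 1) - ψ a → 0` along integer translates, differ by a
constant. -/
lemma convex_increment_unique {f g ψ : ℝ → ℝ} (hf : ConvexOn ℝ (Set.Ioi 0) f)
    (hg : ConvexOn ℝ (Set.Ioi 0) g) (hf1 : ∀ a > 0, f (a + 1) = f a + ψ a)
    (hg1 : ∀ a > 0, g (a + 1) = g a + ψ a)
    (hψ : ∀ a > 0, Tendsto (fun m : ℕ => ψ (a + m + 1) - ψ (a + m)) atTop (𝓝 0))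
    {a : ℝ} (ha : 0 < a) : f a - g a = f 1 - g 1 := by
  have hper : ∀ a > 0, ∀ m : ℕ, f (a + m) - g (a + m) = f a - g a := by
    intro a ha m
    induction m with
    | zero => simp
    | succ m ih =>
      push_cast
      rw [← add_assoc, hf1 _ (by positivity), hg1 _ (by positivity)]
      linarith
  have hstep : ∀ a > 0, ∀ t ∈ Set.Icc (0 : ℝ) 1, f (a + t) - g (a + t) ≤ f a - g a := by
    intro a ha t ht
    have hm : ∀ m : ℕ, f (a + t) - g (a + t) - (f a - g a)
        ≤ t * (ψ (a + m + 1) - ψ (a + m)) := by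
      intro m
      have ht0 := ht.1
      have hA : 0 < a + m := by positivity
      -- both functions are compared with their chords over adjacent integer translates
      have e1 : f (a + m + 1 + t) ≤ (1 - t) * f (a + m + 1) + t * f (a + m + 1 + 1) := by
        have := hf.2 (show a + m + 1 ∈ Set.Ioi 0 from Set.mem_Ioi.2 (by positivity))
          (show a + m + 1 + 1 ∈ Set.Ioi 0 from Set.mem_Ioi.2 (by positivity))
          (show 0 ≤ 1 - t by linarith [ht.2]) ht0 (by ring)
        simp only [smul_eq_mul] at this
        rwa [show (1 - t) * (a + m + 1) + t * (a + m + 1 + 1) = a + m + 1 + t by ring] at this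
      have e2 : (1 + t) * g (a + m + 1) ≤ t * g (a + m) + g (a + m + 1 + t) := by
        have := hg.2 (show a + m ∈ Set.Ioi 0 from Set.mem_Ioi.2 hA)
          (show a + m + 1 + t ∈ Set.Ioi 0 from Set.mem_Ioi.2 (by positivity))
          (show 0 ≤ t / (1 + t) by positivity) (show 0 ≤ 1 / (1 + t) by positivity)
          (by field_simp; ring)
        simp only [smul_eq_mul] at this
        have e : t / (1 + t) * (a + m) + 1 / (1 + t) * (a + m + 1 + t) = a + m + 1 := by
          field_simp; ring
        rw [e] at this
        calc (1 + t) * g (a + m + 1) ≤ (1 + t) * _ :=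
              mul_le_mul_of_nonneg_left this (by positivity)
          _ = _ := by field_simp
      rw [hf1 (a + m + 1) (by positivity)] at e1
      have e3 := hg1 (a + m) hA
      have p1 := hper (a + t) (by positivity) (m + 1)
      have p2 := hper a ha (m + 1)
      push_cast at p1 p2
      rw [show a + t + (m + 1) = a + m + 1 + t by ring] at p1
      rw [← add_assoc] at p2
      nlinarith
    have := ge_of_tendsto' ((hψ a ha).const_mul t) hm
    linarith
  -- the difference is periodic and decreases over distances at most `1`
  have hconst : ∀ a > 0, ∀ t ∈ Set.Icc (0 : ℝ) 1, f (a + t) - g (a + t) = f a - g a := by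
    intro a ha t ht
    refine le_antisymm (hstep a ha t ht) ?_
    have h1 := hstep (a + t) (by linarith [ht.1]) (1 - t) ⟨by linarith [ht.2], by linarith [ht.1]⟩
    have h2 := hper a ha 1
    rw [show a + t + (1 - t) = a + 1 by ring] at h1
    rw [Nat.cast_one] at h2
    linarith
  have h1 := hper a ha 1
  have h2 := hper (1 + Int.fract a) (by linarith [Int.fract_nonneg a]) ⌊a⌋₊
  have h3 := hconst 1 one_pos (Int.fract a) ⟨Int.fract_nonneg a, (Int.fract_lt_one a).le⟩
  have h4 : 1 + Int.fract a + (⌊a⌋₊ : ℝ) = a + (1 : ℕ) := by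
    have h5 := Int.fract_add_floor a
    rw [natCast_floor_eq_intCast_floor ha.le]
    push_cast
    linarith
  rw [h4] at h2
  linarith

/-- The product of Gamma factors of the Selberg integral. -/
noncomputable def gprod (n : ℕ) (k a : ℝ) : ℝ := ∏ m ∈ range n, Real.Gamma (a + k * m)

lemma gprod_pos (n : ℕ) {k a : ℝ} (hk : 0 < k) (ha : 0 < a) : 0 < gprod n k a :=
  prod_pos fun m _ => Real.Gamma_pos_of_pos (by positivity)

lemma log_gprod (n : ℕ) {k a : ℝ} (hk : 0 < k) (ha : 0 < a) :
    Real.log (gprod n k a) = ∑ m ∈ range n, Real.log (Real.Gamma (a + k * m)) :=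
  Real.log_prod fun m _ => (Real.Gamma_pos_of_pos (by positivity)).ne'

lemma convexOn_log_gprod (n : ℕ) {k : ℝ} (hk : 0 < k) :
    ConvexOn ℝ (Set.Ioi 0) fun a => Real.log (gprod n k a) := by
  refine ⟨convex_Ioi 0, fun a ha c hc θ η hθ hη hs => ?_⟩
  have hpos := (convex_Ioi (0 : ℝ)) ha hc hθ hη hs
  simp only [Set.mem_Ioi] at ha hc hpos
  simp only
  rw [log_gprod n hk hpos, log_gprod n hk ha, log_gprod n hk hc, smul_sum, smul_sum,
    ← sum_add_distrib]
  refine sum_le_sum fun m _ => ?_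
  have h1 : 0 < a + k * m := by positivity
  have h2 : 0 < c + k * m := by positivity
  have := Real.convexOn_log_Gamma.2 h1 h2 hθ hη hs
  simp only [smul_eq_mul, Function.comp] at this ⊢
  rw [show θ * a + η * c + k * m = θ * (a + k * m) + η * (c + k * m) by
    linear_combination (-(k * m)) * hs]
  exact this

/-- As functions of `a`, the Selberg integral and the product of Gamma factors are log-convex and
satisfy the same functional equation, hence are proportional. -/
lemma integ_div_gprod (n : ℕ) {k a : ℝ} (hk : 0 < k) (ha : 0 < a) :
    integ k 0 (fun _ : Fin n => a - 1) * gprod n k 1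
      = integ k 0 (fun _ : Fin n => (0 : ℝ)) * gprod n k a := by
  have hI : ∀ a > 0, 0 < integ k 0 (fun _ : Fin n => a - 1) := fun a ha =>
    integ_pos hk fun _ => by linarith
  have h := convex_increment_unique (convexOn_log_integ n hk) (convexOn_log_gprod n hk)
    (ψ := fun a => ∑ m ∈ range n, Real.log (a + k * m)) ?_ ?_ ?_ ha
  · have hI1 := hI 1 one_pos
    simp only [sub_self] at h hI1
    rw [← Real.log_div (hI a ha).ne' (gprod_pos n hk ha).ne',
      ← Real.log_div hI1.ne' (gprod_pos n hk one_pos).ne'] at h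
    have := Real.log_injOn_pos (Set.mem_Ioi.2 (div_pos (hI a ha) (gprod_pos n hk ha)))
      (Set.mem_Ioi.2 (div_pos hI1 (gprod_pos n hk one_pos))) h
    rwa [div_eq_div_iff (gprod_pos n hk ha).ne' (gprod_pos n hk one_pos).ne'] at this
  · intro a ha
    rw [add_sub_cancel_right, integ_add_one n hk ha, Real.log_mul _ (hI a ha).ne', Real.log_prod,
      add_comm]
    · intro m _; positivity
    · exact prod_ne_zero_iff.2 fun m _ => by positivity
  · intro a ha
    rw [log_gprod n hk ha, log_gprod n hk (by linarith), ← sum_add_distrib]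
    refine sum_congr rfl fun m _ => ?_
    have h1 : 0 < a + k * m := by positivity
    rw [show a + 1 + k * m = a + k * m + 1 by ring, Real.Gamma_add_one h1.ne',
      Real.log_mul h1.ne' (Real.Gamma_pos_of_pos h1).ne', add_comm]
  · intro a ha
    simp only [← sum_sub_distrib]
    rw [← sum_const_zero (s := range n)]
    refine tendsto_finsetSum _ fun m _ => ?_
    have h1 : Tendsto (fun l : ℕ => a + l + k * m) atTop atTop :=
      tendsto_atTop_add_const_right _ _ (tendsto_atTop_add_const_left _ _
        tendsto_natCast_atTop_atTop)
    refine ((Real.tendsto_log_comp_add_sub_log 1).comp h1).congr fun l => ?_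
    simp only [Function.comp]
    rw [show a + l + k * m + 1 = a + l + 1 + k * m by ring]

/-- The Selberg integral for real exponents. The constant of proportionality is found by induction
on the number of variables, comparing the value at `a = 1` with that at `a = 2k + 1` in one variable
fewer. -/
lemma integ_eq {k : ℝ} (hk : 0 < k) (n : ℕ) : ∀ a > 0, integ k 0 (fun _ : Fin n => a - 1)
    = (∏ j ∈ range n, Real.Gamma (1 + (j + 1) * k) / Real.Gamma (1 + k)) * gprod n k a := by
  induction n with
  | zero =>
    intro a ha
    have : Rplus 0 = Set.univ := by ext x; simp [Rplus]
    simp [integ, gprod, dens, vand, this, volume_pi, Measure.real]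
  | succ n ih =>
    intro a ha
    have h1 := integ_div_gprod (n + 1) hk ha
    have h2 := ih (2 * k + 1) (by positivity)
    rw [add_sub_cancel_right] at h2
    rw [integ_zero_succ n hk, h2] at h1
    have hG : 0 < Real.Gamma (1 + k) := Real.Gamma_pos_of_pos (by positivity)
    -- both sides are `∏_{m < n + 2} Γ(1 + k m)`, whose factor at `m = 0` is `1`
    have h3 : gprod n k (2 * k + 1) * Real.Gamma (1 + k)
        = gprod (n + 1) k 1 * Real.Gamma (1 + (n + 1) * k) := by
      have e1 := prod_range_succ (fun m : ℕ => Real.Gamma (1 + k * m)) (n + 1)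
      rw [prod_range_succ', prod_range_succ'] at e1
      simp only [Nat.cast_zero, mul_zero, add_zero, Real.Gamma_one, mul_one, zero_add,
        Nat.cast_one] at e1
      push_cast at e1
      rw [gprod, gprod, mul_comm ((n : ℝ) + 1) k, ← e1]
      congr 1
      refine prod_congr rfl fun m _ => ?_
      congr 1; ring
    refine mul_right_cancel₀ (gprod_pos (n + 1) hk one_pos).ne' ?_
    rw [h1, prod_range_succ, (eq_div_iff hG.ne').2 h3]
    ring

/-! ### Complex exponents -/

/-- The measure `e^{-Σ x_i} ∏ x_i⁻¹ ω_k(x) dx` on `ℝ₊ⁿ`. The Selberg integral is the moment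
generating function of `log ∏ x_i` under it. -/
noncomputable def lagMeasure (n : ℕ) (k : ℝ) : Measure (Fin n → ℝ) :=
  (volume.restrict (Rplus n)).withDensity fun x => ENNReal.ofReal (dens k 0 (fun _ => -1) x)

/-- The logarithm of `D(x) = ∏ x_i`. -/
noncomputable def logD {n : ℕ} (x : Fin n → ℝ) : ℝ := ∑ i, Real.log (x i)

/-- The integrand of the Laguerre–Selberg integral with exponent `z - 1` on `D`. -/
noncomputable def cdens (n : ℕ) (k : ℝ) (z : ℂ) (x : Fin n → ℝ) : ℂ :=
  Complex.exp (-(∑ i, x i : ℝ)) * (∏ i, (x i : ℂ) ^ (z - 1)) * (wk n k x : ℂ)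

lemma cdens_eq {n : ℕ} {k : ℝ} (hk : 0 < k) (z : ℂ) {x : Fin n → ℝ} (hx : x ∈ Rplus n) :
    (ENNReal.ofReal (dens k 0 (fun _ => -1) x)).toReal • Complex.exp (z * (logD x : ℝ))
      = cdens n k z x := by
  rw [ENNReal.toReal_ofReal (dens_nonneg le_rfl _ fun i => (hx i).le), cdens, dens, vand_zero hk,
    logD, Complex.real_smul, prod_mul_distrib, ← Real.exp_sum, sum_neg_distrib]
  push_cast
  rw [mul_sum, Complex.exp_sum]
  have h : ∏ i, (x i : ℂ) ^ (z - 1)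
      = (∏ i, ((x i ^ (-1 : ℝ) : ℝ) : ℂ)) * ∏ i, Complex.exp (z * (Real.log (x i) : ℝ)) := by
    rw [← prod_mul_distrib]
    refine prod_congr rfl fun i _ => ?_
    have h0 : (x i : ℂ) ≠ 0 := by exact_mod_cast (hx i).ne'
    rw [Complex.cpow_sub _ _ h0, Complex.cpow_one, Complex.cpow_def_of_ne_zero h0,
      ← Complex.ofReal_log (hx i).le, Real.rpow_neg_one, mul_comm z]
    push_cast
    field_simp
  rw [h]
  ring

lemma cdens_ofReal {n : ℕ} {k : ℝ} (hk : 0 < k) (a : ℝ) {x : Fin n → ℝ} (hx : x ∈ Rplus n) :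
    cdens n k a x = (dens k 0 (fun _ => a - 1) x : ℂ) := by
  rw [cdens, dens, vand_zero hk, prod_mul_distrib, ← Real.exp_sum, sum_neg_distrib]
  push_cast
  have h : ∏ i, (x i : ℂ) ^ ((a : ℂ) - 1) = ∏ i, ((x i ^ (a - 1) : ℝ) : ℂ) :=
    prod_congr rfl fun i _ => by rw [Complex.ofReal_cpow (hx i).le]; push_cast; rfl
  rw [h]
  ring

lemma measurable_logD (n : ℕ) : Measurable (logD : (Fin n → ℝ) → ℝ) := by
  unfold logD
  fun_prop

lemma complexMGF_logD {n : ℕ} {k : ℝ} (hk : 0 < k) (z : ℂ) :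
    ProbabilityTheory.complexMGF logD (lagMeasure n k) z = ∫ x in Rplus n, cdens n k z x := by
  rw [ProbabilityTheory.complexMGF, lagMeasure, integral_withDensity_eq_integral_toReal_smul
    (measurable_dens hk 0 _).ennreal_ofReal (ae_of_all _ fun _ => ENNReal.ofReal_lt_top)]
  exact setIntegral_congr_fun (measurableSet_Rplus n) fun x hx => cdens_eq hk z hx

lemma integrable_exp_iff {n : ℕ} {k : ℝ} (hk : 0 < k) (z : ℂ) :
    Integrable (fun x => Complex.exp (z * (logD x : ℝ))) (lagMeasure n k)
      ↔ IntegrableOn (cdens n k z) (Rplus n) := by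
  rw [lagMeasure, integrable_withDensity_iff_integrable_smul'
    (measurable_dens hk 0 _).ennreal_ofReal (ae_of_all _ fun _ => ENNReal.ofReal_lt_top)]
  exact integrableOn_congr_fun (fun x hx => cdens_eq hk z hx) (measurableSet_Rplus n)

lemma integrable_exp_real {n : ℕ} {k : ℝ} (hk : 0 < k) {a : ℝ} (ha : 0 < a) :
    Integrable (fun x => Real.exp (a * logD x)) (lagMeasure n k) := by
  have h : IntegrableOn (cdens n k a) (Rplus n) := by
    refine (integrableOn_congr_fun (fun x hx => cdens_ofReal hk a hx)
      (measurableSet_Rplus n)).2 ?_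
    exact (integrableOn_dens hk ⟨le_rfl, zero_le_one⟩ fun _ => by linarith).ofReal
  refine ((integrable_exp_iff hk _).2 h).norm.congr (ae_of_all _ fun x => ?_)
  simp [Complex.norm_exp]

lemma integrableOn_cdens {n : ℕ} {k : ℝ} (hk : 0 < k) {z : ℂ} (hz : 0 < z.re) :
    IntegrableOn (cdens n k z) (Rplus n) := by
  rw [← integrable_exp_iff hk]
  have hm := Complex.measurable_ofReal.comp (measurable_logD n)
  refine (integrable_exp_real hk hz).mono'
    (Complex.measurable_exp.comp (hm.const_mul z)).aestronglyMeasurable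
    (ae_of_all _ fun x => ?_)
  simp [Complex.norm_exp]

/-- Both sides are holomorphic on the right half-plane and agree on the positive axis. -/
lemma integral_cdens {n : ℕ} {k : ℝ} (hk : 0 < k) {z : ℂ} (hz : 0 < z.re) :
    ∫ x in Rplus n, cdens n k z x
      = ((∏ j ∈ range n, Real.Gamma (1 + (j + 1) * k) / Real.Gamma (1 + k) : ℝ) : ℂ) *
          ∏ m ∈ range n, Complex.Gamma (z + ((k * (m : ℝ) : ℝ) : ℂ)) := by
  set C : ℝ := ∏ j ∈ range n, Real.Gamma (1 + (j + 1) * k) / Real.Gamma (1 + k) with hC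
  set F : ℂ → ℂ := fun z => (C : ℂ) * ∏ m ∈ range n, Complex.Gamma (z + ((k * (m : ℝ) : ℝ) : ℂ))
    with hF
  have hU : IsOpen {z : ℂ | 0 < z.re} := isOpen_lt continuous_const Complex.continuous_re
  have h1 : AnalyticOnNhd ℂ (ProbabilityTheory.complexMGF logD (lagMeasure n k))
      {z : ℂ | 0 < z.re} := by
    refine ProbabilityTheory.analyticOnNhd_complexMGF.mono fun z hz => ?_
    refine interior_mono (s := Set.Ioi 0) (fun a ha => integrable_exp_real hk ha) ?_
    rwa [interior_Ioi]
  have h2 : AnalyticOnNhd ℂ F {z : ℂ | 0 < z.re} := by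
    refine DifferentiableOn.analyticOnNhd (fun z hz => ?_) hU
    refine DifferentiableAt.differentiableWithinAt (DifferentiableAt.const_mul ?_ _)
    refine DifferentiableAt.fun_finsetProd fun m _ => ?_
    refine DifferentiableAt.comp z (Complex.differentiableAt_Gamma _ fun p hp => ?_) (by fun_prop)
    have := congrArg Complex.re hp
    simp only [Complex.add_re, Complex.ofReal_re, Complex.neg_re, Complex.natCast_re] at this
    have hz' : 0 < z.re := hz
    have : 0 ≤ k * m := by positivity
    have : (0 : ℝ) ≤ p := by positivity
    linarith
  have h3 : ∀ a : ℝ, 0 < a →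
      ProbabilityTheory.complexMGF logD (lagMeasure n k) a = F a := by
    intro a ha
    rw [complexMGF_logD hk, setIntegral_congr_fun (measurableSet_Rplus n)
      fun x hx => cdens_ofReal hk a hx, integral_complex_ofReal]
    have := integ_eq hk n a ha
    rw [integ] at this
    rw [this, Complex.ofReal_mul]
    refine congrArg ((C : ℂ) * ·) ?_
    rw [gprod, Complex.ofReal_prod]
    refine prod_congr rfl fun m _ => ?_
    rw [← Complex.Gamma_ofReal]
    push_cast
    rfl
  have h4 : ∃ᶠ z in 𝓝[≠] (1 : ℂ),
      ProbabilityTheory.complexMGF logD (lagMeasure n k) z = F z := by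
    have ht : Tendsto (fun a : ℝ => (a : ℂ)) (𝓝[≠] 1) (𝓝[≠] 1) := by
      refine tendsto_nhdsWithin_iff.2 ⟨?_, ?_⟩
      · exact (Complex.continuous_ofReal.tendsto' 1 1 (by simp)).mono_left nhdsWithin_le_nhds
      · filter_upwards [self_mem_nhdsWithin] with a ha
        rw [Set.mem_compl_singleton_iff] at ha ⊢
        exact_mod_cast ha
    refine ht.frequently (Eventually.frequently ?_)
    filter_upwards [nhdsWithin_le_nhds (Ioi_mem_nhds (zero_lt_one' ℝ))] with a ha
    exact h3 a ha
  rw [← complexMGF_logD hk]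
  exact h1.eqOn_of_preconnected_of_frequently_eq h2
    (convex_halfSpace_re_gt 0).isPreconnected (by simp) h4 hz

end SelbergLaguerre

/-- Laguerre–Selberg integral:
`∫_{(0,∞)ⁿ} e^{-Σ x_i} (∏ x_i)^{μ-k(n-1)-1} ∏_{i<j}|x_i-x_j|^{2k} dx
  = (∏_{j=1}^n Γ(1+jk)/Γ(1+k)) ∏_{j=1}^n Γ(μ-k(j-1))` for `Re μ > k(n-1)`,
with absolute convergence. -/
theorem selberg_laguerre_integral (n : ℕ) (hn : 2 ≤ n) (k : ℝ) (hk : 0 < k)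
    (μ : ℂ) (hμ : k * ((n : ℝ) - 1) < μ.re) :
    IntegrableOn (fun x : Fin n → ℝ =>
      Complex.exp (-(∑ i, x i : ℝ)) *
        (∏ i, (x i : ℂ) ^ (μ - ((k * ((n : ℝ) - 1) : ℝ) : ℂ) - 1)) * (wk n k x : ℂ))
      (Rplus n) ∧
    ∫ x in Rplus n,
        Complex.exp (-(∑ i, x i : ℝ)) *
          (∏ i, (x i : ℂ) ^ (μ - ((k * ((n : ℝ) - 1) : ℝ) : ℂ) - 1)) * (wk n k x : ℂ)
      = ((∏ j ∈ Finset.range n, Real.Gamma (1 + (j + 1) * k) / Real.Gamma (1 + k) : ℝ) : ℂ) *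
          ∏ j ∈ Finset.range n, Complex.Gamma (μ - ((k * (j : ℝ) : ℝ) : ℂ)) := by
  have hz : 0 < (μ - ((k * ((n : ℝ) - 1) : ℝ) : ℂ)).re := by
    rw [Complex.sub_re, Complex.ofReal_re]; linarith
  refine ⟨SelbergLaguerre.integrableOn_cdens hk hz,
    (SelbergLaguerre.integral_cdens hk hz).trans ?_⟩
  rw [← prod_range_reflect fun j : ℕ => Complex.Gamma (_ + ((k * (j : ℝ) : ℝ) : ℂ))]
  congr 1
  -- the two products run over the same Gamma factors in opposite orders
  refine prod_congr rfl fun j hj => ?_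
  have hj' := mem_range.1 hj
  congr 1
  rw [show ((n - 1 - j : ℕ) : ℝ) = n - 1 - j by
    rw [Nat.cast_sub (by omega), Nat.cast_sub (by omega), Nat.cast_one]]
  push_cast
  ring
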